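/- Let m ≥ 1, let A be a real m×m matrix all of whose characteristic-polynomial roots are real and strictly positive, let λ ≥ 0 be a real number and q ≥ 0 an integer with λ > 0 or q ≥ 1, and let p : ℝ^m → ℝ be a homogeneous polynomial function of degree q. Then there exists a unique homogeneous polynomial function u : ℝ^m → ℝ of degree q such that λ·u(x) + ⟨A x, ∇u(x)⟩ = p(x) for all x ∈ ℝ^m. -/

import Mathlib

/-- The `i`-th component of the Euclidean gradient of `u : ℝ^m → ℝ` at `x`. -/
noncomputable def grad {m : ℕ} (u : (Fin m → ℝ) → ℝ) (x : Fin m → ℝ) (i : Fin m) : ℝ :=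
  fderiv ℝ u x (Pi.single i 1)

/-- `u : ℝ^m → ℝ` is a polynomial function: it is given by a multivariate real
polynomial in the coordinates. -/
def IsPolyFun {m : ℕ} (u : (Fin m → ℝ) → ℝ) : Prop :=
  ∃ P : MvPolynomial (Fin m) ℝ, ∀ x, u x = MvPolynomial.eval x P

open MvPolynomial in
/-- The linear vector field derivation `∑ (Ax)_i ∂_i`. -/
noncomputable def linDer {K : Type*} [CommRing K] {m : ℕ} (A : Matrix (Fin m) (Fin m) K) :
    Derivation K (MvPolynomial (Fin m) K) (MvPolynomial (Fin m) K) :=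
  ∑ i, (∑ j, C (A i j) * X j : MvPolynomial (Fin m) K) • pderiv i

open MvPolynomial in
lemma linDer_apply {K : Type*} [CommRing K] {m : ℕ} (A : Matrix (Fin m) (Fin m) K)
    (P : MvPolynomial (Fin m) K) :
    linDer A P = ∑ i, (∑ j, C (A i j) * X j) * pderiv i P := by
  have h : ∀ (s : Finset (Fin m)) (f : Fin m → Derivation K (MvPolynomial (Fin m) K)
      (MvPolynomial (Fin m) K)), (∑ i ∈ s, f i) P = ∑ i ∈ s, f i P := by
    intro s f
    classical
    induction s using Finset.induction_on with
    | empty => simp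
    | insert a s ha ih => simp [Finset.sum_insert ha, ih]
  simp [linDer, h]

open MvPolynomial in
lemma linDer_X {K : Type*} [CommRing K] {m : ℕ} (A : Matrix (Fin m) (Fin m) K) (i : Fin m) :
    linDer A (X i) = ∑ j, C (A i j) * X j := by
  classical
  rw [linDer_apply, Finset.sum_eq_single i]
  · simp
  · intro b _ hb
    rw [pderiv_X_of_ne (Ne.symm hb), mul_zero]
  · simp

open MvPolynomial in
lemma linDer_map {m : ℕ} (A : Matrix (Fin m) (Fin m) ℝ) (P : MvPolynomial (Fin m) ℝ) :
    linDer (A.map (algebraMap ℝ ℂ)) (map (algebraMap ℝ ℂ) P) = map (algebraMap ℝ ℂ) (linDer A P) := by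
  simp [linDer_apply, pderiv_map]

open MvPolynomial in
lemma linDer_hom {K : Type*} [CommRing K] {m : ℕ} (A : Matrix (Fin m) (Fin m) K)
    {q : ℕ} {P : MvPolynomial (Fin m) K} (hP : P.IsHomogeneous q) :
    (linDer A P).IsHomogeneous q := by
  rw [linDer_apply]
  apply IsHomogeneous.sum
  intro i _
  rcases Nat.eq_zero_or_pos q with rfl | hq
  · rw [← totalDegree_zero_iff_isHomogeneous, totalDegree_eq_zero_iff_eq_C] at hP
    rw [hP, pderiv_C, mul_zero]
    exact isHomogeneous_zero _ _ _
  · have h1 : (∑ j, C (A i j) * X j : MvPolynomial (Fin m) K).IsHomogeneous 1 :=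
      IsHomogeneous.sum _ _ _ fun j _ => isHomogeneous_C_mul_X _ _
    have := h1.mul (hP.pderiv (i := i))
    rwa [Nat.add_sub_cancel' hq] at this

/-- Products of generalized eigenvectors of a derivation. -/
lemma mul_mem_genEig {K R : Type*} [CommRing K] [CommRing R] [Algebra K R]
    (D : Derivation K R R) (μ ν : K) (f g : R)
    (hf : f ∈ Module.End.maxGenEigenspace (D : Module.End K R) μ)
    (hg : g ∈ Module.End.maxGenEigenspace (D : Module.End K R) ν) :
    f * g ∈ Module.End.maxGenEigenspace (D : Module.End K R) (μ + ν) := by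
  rw [Module.End.mem_maxGenEigenspace] at hf hg
  obtain ⟨a, ha⟩ := hf
  obtain ⟨b, hb⟩ := hg
  obtain ⟨n, hn⟩ : ∃ n, a + b = n := ⟨_, rfl⟩
  induction n using Nat.strong_induction_on generalizing a b f g with
  | _ n ih =>
    rcases a with _ | a
    · have : f = 0 := by simpa using ha
      simp [this]
    rcases b with _ | b
    · have : g = 0 := by simpa using hb
      simp [this]
    have h1 := ih (a + (b + 1)) (by omega) (((D : Module.End K R) - μ • 1) f) g a
      (by rw [pow_succ] at ha; exact ha) (b + 1) hb rfl
    have h2 := ih ((a + 1) + b) (by omega) f (((D : Module.End K R) - ν • 1) g) (a + 1) ha b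
      (by rw [pow_succ] at hb; exact hb) rfl
    have h3 := Submodule.add_mem _ h1 h2
    have h4 : (((D : Module.End K R) - μ • 1) f) * g + f * (((D : Module.End K R) - ν • 1) g)
        = ((D : Module.End K R) - (μ + ν) • 1) (f * g) := by
      simp only [LinearMap.sub_apply, LinearMap.smul_apply, Module.End.one_apply,
        Derivation.coeFn_coe, Derivation.leibniz, smul_eq_mul]
      simp only [Algebra.smul_def, map_add]
      ring
    rw [h4, Module.End.mem_maxGenEigenspace] at h3
    obtain ⟨k, hk⟩ := h3
    rw [Module.End.mem_maxGenEigenspace]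
    exact ⟨k + 1, by rw [pow_succ]; exact hk⟩

/-- Sum of the generalized eigenspaces with eigenvalue of positive real part. -/
noncomputable def posGenPart {m : ℕ} (B : Matrix (Fin m) (Fin m) ℂ) :
    Submodule ℂ (MvPolynomial (Fin m) ℂ) :=
  ⨆ μ ∈ {z : ℂ | 0 < z.re}, Module.End.maxGenEigenspace
    (linDer B : Module.End ℂ (MvPolynomial (Fin m) ℂ)) μ

lemma posGenPart_mul {m : ℕ} (B : Matrix (Fin m) (Fin m) ℂ) : posGenPart B * posGenPart B ≤ posGenPart B := by
  unfold posGenPart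
  simp only [Submodule.iSup_mul, Submodule.mul_iSup, iSup_le_iff]
  intro ν hν μ hμ
  rw [Submodule.mul_le]
  intro f hf g hg
  refine Submodule.mem_iSup_of_mem (μ + ν) (Submodule.mem_iSup_of_mem ?_ ?_)
  · simp only [Set.mem_setOf_eq, Complex.add_re] at *
    linarith
  · exact mul_mem_genEig _ _ _ _ _ (by assumption) (by assumption)

open MvPolynomial in
/-- Linear forms. -/
noncomputable def linForm (m : ℕ) : (Fin m → ℂ) →ₗ[ℂ] MvPolynomial (Fin m) ℂ :=
  Fintype.linearCombination ℂ (fun i => (X i : MvPolynomial (Fin m) ℂ))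

open MvPolynomial in
lemma linDer_linForm {m : ℕ} (B : Matrix (Fin m) (Fin m) ℂ) (v : Fin m → ℂ) :
    linDer B (linForm m v) = linForm m (Matrix.toLin' B.transpose v) := by
  simp only [linForm, Fintype.linearCombination_apply, map_sum, Derivation.map_smul, linDer_X,
    Matrix.toLin'_apply, Matrix.mulVec, dotProduct, Finset.smul_sum, Finset.sum_smul,
    Matrix.transpose_apply]
  rw [Finset.sum_comm]
  refine Finset.sum_congr rfl fun j _ => Finset.sum_congr rfl fun i _ => ?_
  simp only [smul_eq_C_mul, C_mul]
  ring

open MvPolynomial in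
lemma X_mem_posGenPart {m : ℕ} (B : Matrix (Fin m) (Fin m) ℂ)
    (hB : ∀ z ∈ B.charpoly.roots, 0 < z.re) (i : Fin m) : X i ∈ posGenPart B := by
  have key : (⊤ : Submodule ℂ (Fin m → ℂ)) ≤ (posGenPart B).comap (linForm m) := by
    rw [← Module.End.iSup_maxGenEigenspace_eq_top (Matrix.toLin' B.transpose)]
    refine iSup_le fun μ => ?_
    by_cases hμ : Module.End.HasEigenvalue (Matrix.toLin' B.transpose) μ
    · rw [Module.End.hasEigenvalue_iff_isRoot_charpoly, Matrix.charpoly_toLin',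
        Matrix.charpoly_transpose] at hμ
      have hpos := hB μ ((Polynomial.mem_roots (B.charpoly_monic.ne_zero)).2 hμ)
      intro v hv
      rw [Submodule.mem_comap]
      refine Submodule.mem_iSup_of_mem μ (Submodule.mem_iSup_of_mem hpos ?_)
      rw [Module.End.mem_maxGenEigenspace] at hv ⊢
      obtain ⟨k, hk⟩ := hv
      refine ⟨k, ?_⟩
      have : ∀ (k : ℕ) (w : Fin m → ℂ),
          (((linDer B : Module.End ℂ (MvPolynomial (Fin m) ℂ)) - μ • 1) ^ k) (linForm m w)
          = linForm m (((Matrix.toLin' B.transpose - μ • 1) ^ k) w) := by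
        intro k
        induction k with
        | zero => intro w; simp
        | succ k ih =>
          intro w
          rw [pow_succ, pow_succ, Module.End.mul_apply, Module.End.mul_apply, ← ih]
          congr 1
          simp only [LinearMap.sub_apply, LinearMap.smul_apply, Module.End.one_apply,
            Derivation.coeFn_coe, map_sub, map_smul, linDer_linForm]
      rw [this, hk, map_zero]
    · have : Module.End.maxGenEigenspace (Matrix.toLin' B.transpose) μ = ⊥ := by
        by_contra hne
        apply hμ
        have h : Module.End.HasUnifEigenvalue (Matrix.toLin' B.transpose) μ ⊤ := hne
        exact h.lt zero_lt_one
      rw [this]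
      exact bot_le
  have := key (Submodule.mem_top (x := Pi.single i (1:ℂ)))
  rw [Submodule.mem_comap, linForm, Fintype.linearCombination_apply_single, one_smul] at this
  exact this

open MvPolynomial in
lemma hom_le_posGenPart {m : ℕ} (B : Matrix (Fin m) (Fin m) ℂ)
    (hB : ∀ z ∈ B.charpoly.roots, 0 < z.re) (q : ℕ) :
    homogeneousSubmodule (Fin m) ℂ (q + 1) ≤ posGenPart B := by
  have h1 : homogeneousSubmodule (Fin m) ℂ 1 ≤ posGenPart B := by
    rw [homogeneousSubmodule_one_eq_span_X, Submodule.span_le]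
    rintro _ ⟨i, rfl⟩
    exact X_mem_posGenPart B hB i
  rw [← homogeneousSubmodule_one_pow]
  induction q with
  | zero => simpa using h1
  | succ q ih =>
    rw [pow_succ]
    exact (mul_le_mul' ih h1).trans (posGenPart_mul B)

open MvPolynomial in
lemma inj_aux {m : ℕ} (A : Matrix (Fin m) (Fin m) ℝ)
    (hA : ∀ z ∈ (Polynomial.map (algebraMap ℝ ℂ) A.charpoly).roots, z.im = 0 ∧ 0 < z.re)
    (lam : ℝ) (hlam : 0 ≤ lam) (q : ℕ) (hq : 0 < lam ∨ 1 ≤ q)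
    (P : MvPolynomial (Fin m) ℝ) (hP : P.IsHomogeneous q)
    (h : lam • P + linDer A P = 0) : P = 0 := by
  rcases q with _ | q
  · have hl : 0 < lam := by simpa using hq
    rw [← totalDegree_zero_iff_isHomogeneous, totalDegree_eq_zero_iff_eq_C] at hP
    have : linDer A P = 0 := by rw [hP]; exact derivation_C _ _
    rw [this, add_zero] at h
    exact (smul_eq_zero.1 h).resolve_left hl.ne'
  · set B := A.map (algebraMap ℝ ℂ) with hBdef
    have hB : ∀ z ∈ B.charpoly.roots, 0 < z.re := by
      intro z hz
      rw [hBdef, Matrix.charpoly_map] at hz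
      exact (hA z hz).2
    set Q := map (algebraMap ℝ ℂ) P with hQ
    have hQp : Q ∈ posGenPart B := hom_le_posGenPart B hB q (hP.map _)
    have hD : linDer B Q = (-(lam : ℂ)) • Q := by
      have h2 := congrArg (map (algebraMap ℝ ℂ)) h
      rw [map_add, ← linDer_map, map_zero, smul_eq_C_mul, map_mul, map_C] at h2
      rw [smul_eq_C_mul, C_neg, neg_mul]
      exact eq_neg_of_add_eq_zero_right h2
    have hQe : Q ∈ Module.End.maxGenEigenspace
        (linDer B : Module.End ℂ (MvPolynomial (Fin m) ℂ)) (-(lam : ℂ)) := by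
      rw [Module.End.mem_maxGenEigenspace]
      refine ⟨1, ?_⟩
      simp [hD]
    have hdis := (Module.End.independent_maxGenEigenspace
      (linDer B : Module.End ℂ (MvPolynomial (Fin m) ℂ))).disjoint_biSup
        (x := -(lam : ℂ)) (y := {z : ℂ | 0 < z.re}) (by simpa using hlam)
    have h0 : Q = 0 := Submodule.disjoint_def.1 hdis Q hQe hQp
    exact map_injective _ (algebraMap ℝ ℂ).injective (by rw [← hQ, h0, map_zero])

open MvPolynomial in
lemma surj_aux {m : ℕ} (A : Matrix (Fin m) (Fin m) ℝ)
    (hA : ∀ z ∈ (Polynomial.map (algebraMap ℝ ℂ) A.charpoly).roots, z.im = 0 ∧ 0 < z.re)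
    (lam : ℝ) (hlam : 0 ≤ lam) (q : ℕ) (hq : 0 < lam ∨ 1 ≤ q)
    (P : MvPolynomial (Fin m) ℝ) (hP : P.IsHomogeneous q) :
    ∃ U : MvPolynomial (Fin m) ℝ, U.IsHomogeneous q ∧ lam • U + linDer A U = P := by
  let H := homogeneousSubmodule (Fin m) ℝ q
  let T : Module.End ℝ (MvPolynomial (Fin m) ℝ) := lam • 1 + (linDer A : Module.End ℝ _)
  have hT : ∀ x ∈ H, T x ∈ H := by
    intro x hx
    exact H.add_mem (H.smul_mem _ hx) (linDer_hom A hx)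
  have : FiniteDimensional ℝ H := Module.Finite.iff_fg.2 (homogeneousSubmodule_fg _ _ q)
  have hinj : Function.Injective (T.restrict hT) := by
    rw [← LinearMap.ker_eq_bot, LinearMap.ker_eq_bot']
    rintro ⟨x, hx⟩ h
    have h' := congrArg Subtype.val h
    exact Subtype.ext (inj_aux A hA lam hlam q hq x hx h')
  obtain ⟨⟨U, hU⟩, hUP⟩ := LinearMap.injective_iff_surjective.1 hinj ⟨P, hP⟩
  exact ⟨U, hU, congrArg Subtype.val hUP⟩

open MvPolynomial in
lemma hasFDerivAt_eval {m : ℕ} (P : MvPolynomial (Fin m) ℝ) (x : Fin m → ℝ) :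
    HasFDerivAt (fun y => eval y P)
      (∑ i, eval x (pderiv i P) • (ContinuousLinearMap.proj i : (Fin m → ℝ) →L[ℝ] ℝ)) x := by
  induction P using MvPolynomial.induction_on with
  | C a => simpa using hasFDerivAt_const a x
  | add p q hp hq =>
    have := hp.add hq
    simp only [map_add, add_smul, Finset.sum_add_distrib]
    exact this
  | mul_X p j hp =>
    have hX : HasFDerivAt (fun y : Fin m → ℝ => y j)
      (ContinuousLinearMap.proj j : (Fin m → ℝ) →L[ℝ] ℝ) x := hasFDerivAt_apply j x
    have := hp.mul hX
    simp only [map_mul, eval_X]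
    refine this.congr_fderiv ?_
    classical
    simp only [Derivation.leibniz, smul_eq_mul, map_add, map_mul, eval_X, add_smul,
      Finset.sum_add_distrib, Finset.smul_sum, smul_smul]
    congr 1
    rw [Finset.sum_eq_single j]
    · simp
    · intro b _ hb
      rw [pderiv_X_of_ne (Ne.symm hb)]; simp
    · simp

open MvPolynomial in
lemma pde_eval {m : ℕ} (A : Matrix (Fin m) (Fin m) ℝ) (lam : ℝ) (P : MvPolynomial (Fin m) ℝ)
    (x : Fin m → ℝ) :
    lam * eval x P + ∑ i, A.mulVec x i * grad (fun y => eval y P) x i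
      = eval x (lam • P + linDer A P) := by
  classical
  have hg : ∀ i, grad (fun y => eval y P) x i = eval x (pderiv i P) := by
    intro i
    rw [grad, (hasFDerivAt_eval P x).fderiv]
    simp [ContinuousLinearMap.sum_apply, Pi.single_apply]
  simp [hg, linDer_apply, Matrix.mulVec, dotProduct, smul_eval]

open MvPolynomial in
lemma coeff_scale {m : ℕ} (s : ℝ) (P : MvPolynomial (Fin m) ℝ) (d : Fin m →₀ ℕ) :
    coeff d (aeval (fun i => C s * X i : Fin m → MvPolynomial (Fin m) ℝ) P)
      = s ^ d.degree * coeff d P := by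
  classical
  induction P using MvPolynomial.induction_on' with
  | add p q hp hq => rw [map_add, coeff_add, hp, hq, coeff_add, mul_add]
  | monomial e a =>
    have : aeval (fun i => C s * X i : Fin m → MvPolynomial (Fin m) ℝ) (monomial e a)
        = monomial e (s ^ e.degree * a) := by
      rw [aeval_monomial, monomial_eq, algebraMap_eq]
      simp only [mul_pow, Finsupp.prod_mul, C_mul, C_pow]
      rw [Finsupp.prod, Finset.prod_pow_eq_pow_sum]
      change _ * (C s ^ e.degree * _) = _
      ring
    rw [this, coeff_monomial, coeff_monomial]
    split_ifs with h
    · rw [h]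
    · simp

open MvPolynomial in
lemma hom_of_fun {m : ℕ} (q : ℕ) (P : MvPolynomial (Fin m) ℝ)
    (h : ∀ (s : ℝ) (x : Fin m → ℝ), eval (s • x) P = s ^ q * eval x P) : P.IsHomogeneous q := by
  have h1 : aeval (fun i => C 2 * X i : Fin m → MvPolynomial (Fin m) ℝ) P = C (2 ^ q) * P := by
    apply MvPolynomial.funext
    intro x
    rw [map_mul, eval_C, ← h 2 x, aeval_eq_bind₁, eval, eval₂Hom_bind₁]
    congr 2
    funext i
    simp
  intro d hd
  have h2 := congrArg (coeff d) h1
  rw [coeff_scale, coeff_C_mul] at h2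
  have h3 := mul_right_cancel₀ hd h2
  have h4 : d.degree = q := pow_right_injective₀ (by norm_num) (by norm_num) h3
  rw [← h4, Finsupp.degree_eq_weight_one]
  rfl

open MvPolynomial in
lemma fun_of_hom {m : ℕ} (q : ℕ) (P : MvPolynomial (Fin m) ℝ) (hP : P.IsHomogeneous q)
    (s : ℝ) (x : Fin m → ℝ) : eval (s • x) P = s ^ q * eval x P := by
  rw [eval_eq, eval_eq, Finset.mul_sum]
  refine Finset.sum_congr rfl fun d hd => ?_
  have hdeg := hP.degree_eq_sum_deg_support hd
  simp only [Pi.smul_apply, smul_eq_mul, mul_pow, Finset.prod_mul_distrib]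
  rw [Finset.prod_pow_eq_pow_sum]
  rw [← hdeg]
  ring

/-- paper's Lemma 3.1(i): if all roots of the characteristic polynomial of
`A` are real and strictly positive, `λ ≥ 0`, `q ≥ 0` with `λ > 0` or `q ≥ 1`, and `p` is a
homogeneous polynomial function of degree `q`, then there is a unique homogeneous polynomial
function `u` of degree `q` with `λ·u(x) + ⟨A x, ∇u(x)⟩ = p(x)` for all `x`. -/
theorem stmt0 (m : ℕ) (hm : 1 ≤ m) (A : Matrix (Fin m) (Fin m) ℝ)
    (hA : ∀ z ∈ (Polynomial.map (algebraMap ℝ ℂ) A.charpoly).roots, z.im = 0 ∧ 0 < z.re)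
    (lam : ℝ) (hlam : 0 ≤ lam) (q : ℕ) (hq : 0 < lam ∨ 1 ≤ q)
    (p : (Fin m → ℝ) → ℝ) (hp : IsPolyFun p)
    (hphom : ∀ (s : ℝ) (x : Fin m → ℝ), p (s • x) = s ^ q * p x) :
    ∃! u : (Fin m → ℝ) → ℝ,
      IsPolyFun u ∧ (∀ (s : ℝ) (x : Fin m → ℝ), u (s • x) = s ^ q * u x) ∧
        ∀ x, lam * u x + ∑ i, A.mulVec x i * grad u x i = p x := by
  obtain ⟨P, hP⟩ := hp
  have hPh : P.IsHomogeneous q := hom_of_fun q P (fun s x => by rw [← hP, ← hP, hphom])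
  obtain ⟨U, hU, hUP⟩ := surj_aux A hA lam hlam q hq P hPh
  refine ⟨fun x => MvPolynomial.eval x U, ⟨⟨U, fun _ => rfl⟩, fun s x => fun_of_hom q U hU s x,
    fun x => ?_⟩, ?_⟩
  · have := pde_eval A lam U x
    rw [hUP, ← hP] at this
    exact this
  · rintro v ⟨⟨V, hV⟩, hvh, hve⟩
    obtain rfl : v = fun y => MvPolynomial.eval y V := funext hV
    have hVh : V.IsHomogeneous q := hom_of_fun q V hvh
    have hVP : lam • V + linDer A V = P := by
      apply MvPolynomial.funext
      intro x
      rw [← pde_eval, ← hP]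
      exact hve x
    have : V - U = 0 := by
      apply inj_aux A hA lam hlam q hq _ (hVh.sub hU)
      rw [smul_sub, map_sub, ← sub_eq_zero.2 (hVP.trans hUP.symm)]
      abel
    rw [sub_eq_zero.1 this]
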